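/- Let S be a group-bound, conditionally completely regular semigroup and let ρ be the relation: s ρ t iff for every x ∈ S, (some weak inverse of s is 𝒟-related to x) ↔ (some weak inverse of t is 𝒟-related to x). Then: (i) for all s, t ∈ S, s ρ t if and only if there exist idempotents e, f with e 𝒥 f and integers n, m ≥ 1 such that s^n ℋ e and t^m ℋ f (i.e. the ρ-classes are exactly the sets K_{J_e} = ⋃_{f ∈ E(J_e)} K_f); and (ii) each ρ-class is an Archimedean subsemigroup: if s ρ t then there exist n ≥ 1 and u, v ∈ S with u ρ s, v ρ s, and s^n = u*t*v. -/

import Mathlib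

/-- Green's relation ℒ: `s ℒ t` iff `{s} ∪ Ss = {t} ∪ St`. -/
def LRel {S : Type*} [Semigroup S] (s t : S) : Prop :=
  ({s} ∪ {x | ∃ a : S, x = a * s} : Set S) = ({t} ∪ {x | ∃ a : S, x = a * t} : Set S)

/-- Green's relation ℛ: `s ℛ t` iff `{s} ∪ sS = {t} ∪ tS`. -/
def RRel {S : Type*} [Semigroup S] (s t : S) : Prop :=
  ({s} ∪ {x | ∃ a : S, x = s * a} : Set S) = ({t} ∪ {x | ∃ a : S, x = t * a} : Set S)

/-- Green's relation ℋ = ℒ ∩ ℛ. -/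
def HRel {S : Type*} [Semigroup S] (s t : S) : Prop := LRel s t ∧ RRel s t

/-- Green's relation 𝒟: `s 𝒟 t` iff `∃ u, s ℒ u` and `u ℛ t`. -/
def DRel {S : Type*} [Semigroup S] (s t : S) : Prop := ∃ u : S, LRel s u ∧ RRel u t

/-- An element `s` is regular if `s = s * x * s` for some `x`. -/
def IsRegularElem {S : Type*} [Semigroup S] (s : S) : Prop := ∃ x : S, s = s * x * s

/-- `S` is conditionally completely regular if every regular element is
ℋ-related to an idempotent. -/
def CondCompletelyRegular (S : Type*) [Semigroup S] : Prop :=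
  ∀ s : S, IsRegularElem s → ∃ e : S, e * e = e ∧ HRel s e

/-- `spow s n` is the power `s^(n+1)`, so that `spow s n` ranges over all
positive powers of `s` as `n` ranges over `ℕ`. -/
def spow {S : Type*} [Semigroup S] (s : S) : ℕ → S
  | 0 => s
  | n + 1 => spow s n * s

/-- The principal two-sided ideal generated by `s`: `{s} ∪ Ss ∪ sS ∪ SsS`. -/
def principalIdeal {S : Type*} [Semigroup S] (s : S) : Set S :=
  {s} ∪ {x | ∃ a : S, x = a * s} ∪ {x | ∃ a : S, x = s * a} ∪
    {x | ∃ a b : S, x = a * s * b}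

/-- Green's relation 𝒥: equality of principal two-sided ideals. -/
def JRel {S : Type*} [Semigroup S] (s t : S) : Prop := principalIdeal s = principalIdeal t

/-- The relation ρ: `s ρ t` iff for every `x`, some weak inverse of `s` is
𝒟-related to `x` exactly when some weak inverse of `t` is. -/
def rhoRel {S : Type*} [Semigroup S] (s t : S) : Prop :=
  ∀ x : S, (∃ z : S, z = z * s * z ∧ DRel z x) ↔ (∃ z : S, z = z * t * z ∧ DRel z x)

/-!
Write `J(s)` for `principalIdeal s`. In any semigroup, the elements 𝒟-related to a weak inverse of
`s` are exactly the regular elements of `J(s)`, so `s ρ t` says that `J(s)` and `J(t)` contain the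
same regular elements; in particular `ρ` restricts to 𝒥 on regular elements. In a conditionally
completely regular semigroup every regular `w` lies in `J(w * w)`, and hence a regular element of
`J(a) ∩ J(b)` lies in `J(a * b)`. Thus every element is ρ-related to each of its powers, and
group-boundedness reduces both claims to regular elements.
-/

section

variable {S : Type*} [Semigroup S] {a b e f s t u x y z : S} {m n : ℕ}

theorem self_mem_principalIdeal (s : S) : s ∈ principalIdeal s :=
  Or.inl (Or.inl (Or.inl rfl))

theorem mem_principalIdeal_of_eq_mul_left (h : x = a * s) : x ∈ principalIdeal s :=
  Or.inl (Or.inl (Or.inr ⟨a, h⟩))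

theorem mem_principalIdeal_of_eq_mul_right (h : x = s * a) : x ∈ principalIdeal s :=
  Or.inl (Or.inr ⟨a, h⟩)

theorem mem_principalIdeal_of_eq_mul_mul (h : x = a * s * b) : x ∈ principalIdeal s :=
  Or.inr ⟨a, b, h⟩

theorem mul_left_mem_principalIdeal (c : S) (h : x ∈ principalIdeal s) :
    c * x ∈ principalIdeal s := by
  rcases h with ((rfl | ⟨p, rfl⟩) | ⟨q, rfl⟩) | ⟨p, q, rfl⟩
  · exact mem_principalIdeal_of_eq_mul_left rfl
  · exact mem_principalIdeal_of_eq_mul_left (mul_assoc ..).symm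
  · exact mem_principalIdeal_of_eq_mul_mul (mul_assoc ..).symm
  · exact mem_principalIdeal_of_eq_mul_mul (a := c * p) (b := q) (by simp only [mul_assoc])

theorem mul_right_mem_principalIdeal (c : S) (h : x ∈ principalIdeal s) :
    x * c ∈ principalIdeal s := by
  rcases h with ((rfl | ⟨p, rfl⟩) | ⟨q, rfl⟩) | ⟨p, q, rfl⟩
  · exact mem_principalIdeal_of_eq_mul_right rfl
  · exact mem_principalIdeal_of_eq_mul_mul rfl
  · exact mem_principalIdeal_of_eq_mul_right (mul_assoc ..)
  · exact mem_principalIdeal_of_eq_mul_mul (mul_assoc ..)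

theorem principalIdeal_subset_of_mem (h : x ∈ principalIdeal y) :
    principalIdeal x ⊆ principalIdeal y := by
  rintro w (((rfl | ⟨p, rfl⟩) | ⟨q, rfl⟩) | ⟨p, q, rfl⟩)
  · exact h
  · exact mul_left_mem_principalIdeal p h
  · exact mul_right_mem_principalIdeal q h
  · exact mul_right_mem_principalIdeal q (mul_left_mem_principalIdeal p h)

theorem spow_mem_principalIdeal (s : S) : ∀ n, spow s n ∈ principalIdeal s
  | 0 => self_mem_principalIdeal s
  | n + 1 => mul_right_mem_principalIdeal s (spow_mem_principalIdeal s n)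

theorem jRel_iff_mem_principalIdeal :
    JRel x y ↔ x ∈ principalIdeal y ∧ y ∈ principalIdeal x :=
  ⟨fun h => ⟨h.subset (self_mem_principalIdeal x), h.superset (self_mem_principalIdeal y)⟩,
    fun h => (principalIdeal_subset_of_mem h.1).antisymm (principalIdeal_subset_of_mem h.2)⟩

theorem LRel.of_mul_eq (h : a * x = y) (h' : b * y = x) : LRel x y := by
  ext w
  constructor
  · rintro (rfl | ⟨c, rfl⟩)
    · exact Or.inr ⟨b, h'.symm⟩
    · exact Or.inr ⟨c * b, by rw [mul_assoc, h']⟩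
  · rintro (rfl | ⟨c, rfl⟩)
    · exact Or.inr ⟨a, h.symm⟩
    · exact Or.inr ⟨c * a, by rw [mul_assoc, h]⟩

theorem RRel.of_mul_eq (h : x * a = y) (h' : y * b = x) : RRel x y := by
  ext w
  constructor
  · rintro (rfl | ⟨c, rfl⟩)
    · exact Or.inr ⟨b, h'.symm⟩
    · exact Or.inr ⟨b * c, by rw [← mul_assoc, h']⟩
  · rintro (rfl | ⟨c, rfl⟩)
    · exact Or.inr ⟨a, h.symm⟩
    · exact Or.inr ⟨a * c, by rw [← mul_assoc, h]⟩

theorem LRel.symm (h : LRel x y) : LRel y x := Eq.symm h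

theorem RRel.symm (h : RRel x y) : RRel y x := Eq.symm h

theorem LRel.eq_or_eq_mul (h : LRel x y) : x = y ∨ ∃ a, x = a * y :=
  h.subset (Or.inl rfl)

theorem RRel.eq_or_eq_mul (h : RRel x y) : x = y ∨ ∃ a, x = y * a :=
  h.subset (Or.inl rfl)

theorem LRel.mem_principalIdeal (h : LRel x y) : x ∈ principalIdeal y := by
  rcases h.eq_or_eq_mul with rfl | ⟨a, ha⟩
  · exact self_mem_principalIdeal x
  · exact mem_principalIdeal_of_eq_mul_left ha

theorem RRel.mem_principalIdeal (h : RRel x y) : x ∈ principalIdeal y := by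
  rcases h.eq_or_eq_mul with rfl | ⟨a, ha⟩
  · exact self_mem_principalIdeal x
  · exact mem_principalIdeal_of_eq_mul_right ha

theorem LRel.jRel (h : LRel x y) : JRel x y :=
  jRel_iff_mem_principalIdeal.2 ⟨h.mem_principalIdeal, h.symm.mem_principalIdeal⟩

theorem RRel.jRel (h : RRel x y) : JRel x y :=
  jRel_iff_mem_principalIdeal.2 ⟨h.mem_principalIdeal, h.symm.mem_principalIdeal⟩

theorem DRel.jRel : DRel x y → JRel x y
  | ⟨_, hL, hR⟩ => hL.jRel.trans hR.jRel

theorem isRegularElem_of_isIdempotentElem (he : IsIdempotentElem e) : IsRegularElem e :=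
  ⟨e, by rw [he.eq, he.eq]⟩

theorem LRel.isRegularElem (h : LRel x y) (hx : IsRegularElem x) : IsRegularElem y := by
  obtain ⟨v, hv⟩ := hx
  rcases h.eq_or_eq_mul with rfl | ⟨c, hc⟩
  · exact ⟨v, hv⟩
  rcases h.symm.eq_or_eq_mul with rfl | ⟨d, hd⟩
  · exact ⟨v, hv⟩
  refine ⟨v * c, ?_⟩
  calc y = d * (x * v * x) := by rw [← hv, hd]
    _ = d * x * v * x := by simp only [mul_assoc]
    _ = y * v * (c * y) := by rw [← hd, ← hc]
    _ = y * (v * c) * y := by simp only [mul_assoc]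

theorem RRel.isRegularElem (h : RRel x y) (hx : IsRegularElem x) : IsRegularElem y := by
  obtain ⟨v, hv⟩ := hx
  rcases h.eq_or_eq_mul with rfl | ⟨c, hc⟩
  · exact ⟨v, hv⟩
  rcases h.symm.eq_or_eq_mul with rfl | ⟨d, hd⟩
  · exact ⟨v, hv⟩
  refine ⟨c * v, ?_⟩
  calc y = x * v * x * d := by rw [← hv, hd]
    _ = x * v * (x * d) := mul_assoc ..
    _ = y * c * v * y := by rw [← hd, ← hc]
    _ = y * (c * v) * y := by simp only [mul_assoc]

theorem DRel.isRegularElem (hx : IsRegularElem x) : DRel x y → IsRegularElem y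
  | ⟨_, hL, hR⟩ => hR.isRegularElem (hL.isRegularElem hx)

theorem IsRegularElem.exists_eq_mul_mul (hx : IsRegularElem x) (h : x ∈ principalIdeal s) :
    ∃ p q, x = p * s * q := by
  obtain ⟨v, hv⟩ := hx
  have hxv : x = x * v * x * (v * x) := by rw [← hv, ← mul_assoc, ← hv]
  rcases h with ((rfl | ⟨p, hp⟩) | ⟨q, hq⟩) | hpq
  · exact ⟨_, _, hxv⟩
  · exact ⟨x * v * p, v * x, by rwa [mul_assoc (x * v), ← hp]⟩
  · exact ⟨x * v, q * (v * x), by rwa [← mul_assoc, mul_assoc (x * v), ← hq]⟩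
  · exact hpq

theorem IsRegularElem.exists_jRel_eq_mul_mul (hx : IsRegularElem x) (h : x ∈ principalIdeal s) :
    ∃ u v, JRel u x ∧ JRel v x ∧ x = u * s * v := by
  obtain ⟨p, q, hpq⟩ := hx.exists_eq_mul_mul h
  obtain ⟨w, hw⟩ := hx
  have hx_eq : x = x * (w * p) * s * (q * w * x) :=
    calc x = x * w * x * w * x := by rw [← hw, ← hw]
      _ = x * w * (p * s * q) * w * x := by rw [← hpq]
      _ = x * (w * p) * s * (q * w * x) := by simp only [mul_assoc]
  exact ⟨x * (w * p), q * w * x,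
    jRel_iff_mem_principalIdeal.2 ⟨mem_principalIdeal_of_eq_mul_right rfl,
      mem_principalIdeal_of_eq_mul_right (hx_eq.trans (mul_assoc ..))⟩,
    jRel_iff_mem_principalIdeal.2 ⟨mem_principalIdeal_of_eq_mul_left rfl,
      mem_principalIdeal_of_eq_mul_left hx_eq⟩, hx_eq⟩

theorem IsRegularElem.exists_weakInverse_dRel (hx : IsRegularElem x) (h : x ∈ principalIdeal s) :
    ∃ z, z = z * s * z ∧ DRel z x := by
  obtain ⟨p, q, hpq⟩ := hx.exists_eq_mul_mul h
  obtain ⟨v, hv⟩ := hx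
  have hL : p * s * (q * v * (x * v * p)) = x * v * p :=
    calc p * s * (q * v * (x * v * p)) = p * s * q * v * x * v * p := by simp only [mul_assoc]
      _ = x * v * p := by rw [← hpq, ← hv]
  have hR : x * v * p * (s * q) = x :=
    calc x * v * p * (s * q) = x * v * (p * s * q) := by simp only [mul_assoc]
      _ = x := by rw [← hpq, ← hv]
  refine ⟨q * v * (x * v * p), ?_, x * v * p, LRel.of_mul_eq hL rfl,
    RRel.of_mul_eq hR (mul_assoc ..).symm⟩
  calc q * v * (x * v * p) = q * v * (x * v * x * v * p) := by rw [← hv]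
    _ = q * v * (x * v * (p * s * (q * v * (x * v * p)))) := by rw [hL]; simp only [mul_assoc]
    _ = q * v * (x * v * p) * s * (q * v * (x * v * p)) := by simp only [mul_assoc]

theorem exists_weakInverse_dRel_iff :
    (∃ z, z = z * s * z ∧ DRel z x) ↔ IsRegularElem x ∧ x ∈ principalIdeal s := by
  refine ⟨?_, fun h => h.1.exists_weakInverse_dRel h.2⟩
  rintro ⟨z, hz, hzx⟩
  have hxz : x ∈ principalIdeal z := (jRel_iff_mem_principalIdeal.1 hzx.jRel).2
  exact ⟨hzx.isRegularElem ⟨s, hz⟩,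
    principalIdeal_subset_of_mem (mem_principalIdeal_of_eq_mul_mul hz) hxz⟩

theorem rhoRel_iff_forall_isRegularElem :
    rhoRel s t ↔ ∀ x, IsRegularElem x → (x ∈ principalIdeal s ↔ x ∈ principalIdeal t) := by
  simp only [rhoRel, exists_weakInverse_dRel_iff, and_congr_right_iff]

theorem rhoRel.symm (h : rhoRel s t) : rhoRel t s := fun x => (h x).symm

theorem rhoRel.trans (h : rhoRel s t) (h' : rhoRel t u) : rhoRel s u :=
  fun x => (h x).trans (h' x)

theorem JRel.rhoRel (h : JRel s t) : rhoRel s t :=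
  rhoRel_iff_forall_isRegularElem.2 fun x _ => by rw [h]

theorem IsRegularElem.rhoRel_iff_jRel (hs : IsRegularElem s) (ht : IsRegularElem t) :
    rhoRel s t ↔ JRel s t := by
  refine ⟨fun h => ?_, JRel.rhoRel⟩
  rw [rhoRel_iff_forall_isRegularElem] at h
  exact jRel_iff_mem_principalIdeal.2 ⟨(h s hs).1 (self_mem_principalIdeal s),
    (h t ht).2 (self_mem_principalIdeal t)⟩

theorem LRel.mul_eq_self_of_isIdempotentElem (h : LRel x e) (he : IsIdempotentElem e) :
    x * e = x := by
  rcases h.eq_or_eq_mul with rfl | ⟨c, rfl⟩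
  · exact he
  · rw [mul_assoc, he.eq]

theorem CondCompletelyRegular.mem_principalIdeal_mul_self (hS : CondCompletelyRegular S)
    (hx : IsRegularElem x) : x ∈ principalIdeal (x * x) := by
  obtain ⟨e, he, hL, hR⟩ := hS x hx
  have hxe : x * e = x := hL.mul_eq_self_of_isIdempotentElem he
  rcases hR.symm.eq_or_eq_mul with rfl | ⟨d, rfl⟩
  · rw [he]
    exact self_mem_principalIdeal e
  · exact mem_principalIdeal_of_eq_mul_right (hxe.symm.trans (mul_assoc ..).symm)

theorem CondCompletelyRegular.weakInverse_mem_principalIdeal_mul_self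
    (hS : CondCompletelyRegular S) (hz : z = z * y * z) : z ∈ principalIdeal (y * y) := by
  have hyzy : IsRegularElem (y * z * y) := ⟨z, by
    calc y * z * y = y * (z * y * z * y * z) * y := by rw [← hz, ← hz]
      _ = y * z * y * z * (y * z * y) := by simp only [mul_assoc]⟩
  have hz_mem : z ∈ principalIdeal (y * z * y) :=
    mem_principalIdeal_of_eq_mul_mul <|
      calc z = z * y * z * y * z := by rw [← hz, ← hz]
        _ = z * (y * z * y) * z := by simp only [mul_assoc]
  have hsq_mem : y * z * y * (y * z * y) ∈ principalIdeal (y * y) :=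
    mem_principalIdeal_of_eq_mul_mul (a := y * z) (b := z * y) (by simp only [mul_assoc])
  exact principalIdeal_subset_of_mem hsq_mem
    (principalIdeal_subset_of_mem (hS.mem_principalIdeal_mul_self hyzy) hz_mem)

theorem CondCompletelyRegular.mem_principalIdeal_mul (hS : CondCompletelyRegular S)
    (hx : IsRegularElem x) (ha : x ∈ principalIdeal a) (hb : x ∈ principalIdeal b) :
    x ∈ principalIdeal (a * b) := by
  obtain ⟨p, q, hpq⟩ := hx.exists_eq_mul_mul ha
  obtain ⟨r, t, hrt⟩ := hx.exists_eq_mul_mul hb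
  have ⟨v, hv⟩ := hx
  -- `b` comes before `a`, so that `a * b` occurs in the square of `b * c * a`.
  let c := t * v * p
  have hx_mem : x ∈ principalIdeal (b * c * a) :=
    mem_principalIdeal_of_eq_mul_mul <|
      calc x = r * b * t * v * (p * a * q) := by rw [← hrt, ← hpq, ← hv]
        _ = r * (b * c * a) * q := by simp only [c, mul_assoc]
  have hsq_mem : b * c * a * (b * c * a) ∈ principalIdeal (a * b) :=
    mem_principalIdeal_of_eq_mul_mul (a := b * c) (b := c * a) (by simp only [mul_assoc])
  obtain ⟨z, hz, hzx⟩ := hx.exists_weakInverse_dRel hx_mem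
  exact principalIdeal_subset_of_mem hsq_mem (principalIdeal_subset_of_mem
    (hS.weakInverse_mem_principalIdeal_mul_self hz) (jRel_iff_mem_principalIdeal.1 hzx.jRel).2)

theorem CondCompletelyRegular.mem_principalIdeal_spow (hS : CondCompletelyRegular S)
    (hx : IsRegularElem x) (h : x ∈ principalIdeal s) : ∀ n, x ∈ principalIdeal (spow s n)
  | 0 => h
  | n + 1 => hS.mem_principalIdeal_mul hx (hS.mem_principalIdeal_spow hx h n) h

theorem CondCompletelyRegular.rhoRel_spow (hS : CondCompletelyRegular S) (s : S) (n : ℕ) :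
    rhoRel s (spow s n) :=
  rhoRel_iff_forall_isRegularElem.2 fun _ hx => ⟨fun h => hS.mem_principalIdeal_spow hx h n,
    fun h => principalIdeal_subset_of_mem (spow_mem_principalIdeal s n) h⟩

theorem CondCompletelyRegular.rhoRel_iff_jRel_of_hRel_spow (hS : CondCompletelyRegular S)
    (he : IsIdempotentElem e) (hf : IsIdempotentElem f) (hse : HRel (spow s n) e)
    (htf : HRel (spow t m) f) : rhoRel s t ↔ JRel e f := by
  have hs : rhoRel s e := (hS.rhoRel_spow s n).trans hse.1.jRel.rhoRel
  have ht : rhoRel t f := (hS.rhoRel_spow t m).trans htf.1.jRel.rhoRel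
  rw [← (isRegularElem_of_isIdempotentElem he).rhoRel_iff_jRel
    (isRegularElem_of_isIdempotentElem hf)]
  exact ⟨fun h => hs.symm.trans (h.trans ht), fun h => hs.trans (h.trans ht.symm)⟩

theorem CondCompletelyRegular.exists_spow_eq_mul_mul (hS : CondCompletelyRegular S)
    (hn : IsRegularElem (spow s n)) (h : rhoRel s t) :
    ∃ u v, rhoRel u s ∧ rhoRel v s ∧ spow s n = u * t * v := by
  have hmem : spow s n ∈ principalIdeal t :=
    (rhoRel_iff_forall_isRegularElem.1 h _ hn).1 (spow_mem_principalIdeal s n)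
  obtain ⟨u, v, hu, hv, huv⟩ := hn.exists_jRel_eq_mul_mul hmem
  have hs : rhoRel (spow s n) s := (hS.rhoRel_spow s n).symm
  exact ⟨u, v, hu.rhoRel.trans hs, hv.rhoRel.trans hs, huv⟩

end

/-- In a group-bound, conditionally completely regular semigroup:
(i) `s ρ t` iff there are 𝒥-related idempotents `e, f` with some positive power
of `s` ℋ-related to `e` and some positive power of `t` ℋ-related to `f`
(the ρ-classes are the sets `K_{J_e}`);
(ii) each ρ-class is an Archimedean subsemigroup: if `s ρ t` then
`s^n = u * t * v` for some `n ≥ 1` and `u, v` in the ρ-class of `s`. -/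
theorem stmt19 {S : Type*} [Semigroup S]
    (hGB : ∀ a : S, ∃ n : ℕ, ∃ e : S, e * e = e ∧ HRel (spow a n) e)
    (hS : CondCompletelyRegular S) :
    (∀ s t : S, rhoRel s t ↔
      ∃ e f : S, e * e = e ∧ f * f = f ∧ JRel e f ∧
        (∃ n : ℕ, HRel (spow s n) e) ∧ (∃ m : ℕ, HRel (spow t m) f)) ∧
    (∀ s t : S, rhoRel s t →
      ∃ n : ℕ, ∃ u v : S, rhoRel u s ∧ rhoRel v s ∧ spow s n = u * t * v) := by
  refine ⟨fun s t => ⟨fun h => ?_, ?_⟩, fun s t h => ?_⟩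
  · obtain ⟨n, e, he, hse⟩ := hGB s
    obtain ⟨m, f, hf, htf⟩ := hGB t
    exact ⟨e, f, he, hf, (hS.rhoRel_iff_jRel_of_hRel_spow he hf hse htf).1 h, ⟨n, hse⟩, ⟨m, htf⟩⟩
  · rintro ⟨e, f, he, hf, hef, ⟨n, hse⟩, ⟨m, htf⟩⟩
    exact (hS.rhoRel_iff_jRel_of_hRel_spow he hf hse htf).2 hef
  · obtain ⟨n, e, he, hse⟩ := hGB s
    have hn : IsRegularElem (spow s n) :=
      hse.1.symm.isRegularElem (isRegularElem_of_isIdempotentElem he)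
    exact ⟨n, hS.exists_spow_eq_mul_mul hn h⟩
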